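/- arXiv:math/0005217 — 7 statements merged into one kernel-verified Lean document; each statement's English description precedes it below -/
import Mathlib

section
/- For every integer k ≥ 0, the dimension of the complex vector space of level-one modular forms of weight k equals the number of pairs (a,b) of nonnegative integers with 4a + 6b = k. (This is the coefficient-wise form of Proposition 2(a): the generating function of the dimensions h⁰ of tensor powers of the universal cotangent line bundle on the moduli of 1-pointed genus-one stable curves is 1/((1−q⁴)(1−q⁶)), via the identification of sections of L₁^k with weight-k modular forms.) -/
open scoped MatrixGroups in
lemma finrank_aux (Γ : Subgroup (GL (Fin 2) ℝ)) [Γ.HasDetOne] (h : Γ = 𝒮ℒ) (k : ℤ) :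
    Module.finrank ℂ (ModularForm Γ k) = Module.finrank ℂ (ModularForm 𝒮ℒ k) := by
  subst h
  rfl

lemma card_aux (k : ℕ) (hk : Even k) :
    Nat.card {p : ℕ × ℕ // 4 * (p.1 : ℤ) + 6 * (p.2 : ℤ) = k} =
      if k ≡ 2 [MOD 12] then k / 12 else k / 12 + 1 := by
  obtain ⟨m, rfl⟩ := hk
  obtain ⟨N, hN⟩ : ∃ N, N = if m + m ≡ 2 [MOD 12] then (m + m) / 12 else (m + m) / 12 + 1 :=
    ⟨_, rfl⟩
  rw [← hN]
  have hN1 : ∀ j, j < N ↔ 3 * (m % 2 + 2 * j) ≤ m := by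
    intro j
    have hN' : (m % 6 = 1 ∧ N = m / 6) ∨ (m % 6 ≠ 1 ∧ N = m / 6 + 1) := by
      split_ifs at hN with h <;> unfold Nat.ModEq at h
      · left; omega
      · right; omega
    obtain ⟨q, r, hq, hr, h6, hmm⟩ : ∃ q r, m / 6 = q ∧ m % 6 = r ∧ r < 6 ∧ m = 6 * q + r :=
      ⟨_, _, rfl, rfl, by omega, by omega⟩
    have h2 : m % 2 = r % 2 := by omega
    rw [hq, hr] at hN'
    rw [h2]
    clear hN hq hr h2
    subst hmm
    interval_cases r <;> norm_num at hN' ⊢ <;> omega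
  clear hN
  rw [← Nat.card_fin N]
  refine Nat.card_congr (Equiv.symm ?_)
  refine ⟨fun j => ⟨((m - 3 * (m % 2 + 2 * j.1)) / 2, m % 2 + 2 * j.1), ?_⟩,
    fun p => ⟨p.1.2 / 2, ?_⟩, ?_, ?_⟩
  · have := (hN1 j.1).1 j.2
    dsimp only
    omega
  · rw [hN1]
    have := p.2
    have h1 : m = 2 * p.1.1 + 3 * p.1.2 := by omega
    have h2 : m % 2 = p.1.2 % 2 := by omega
    rw [h2, Nat.mod_add_div]
    omega
  · intro j
    ext
    dsimp only
    omega
  · rintro ⟨⟨a, b⟩, h⟩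
    dsimp only at h
    ext <;> dsimp only <;> omega

/-- **Dimension of level-one modular forms of weight `k`** (Proposition 2(a), coefficientwise):
for every integer `k ≥ 0`, the dimension over `ℂ` of the space of modular forms of weight `k`
for the full modular group `SL(2, ℤ)` equals the number of pairs `(a, b)` of nonnegative
integers with `4a + 6b = k`. -/
theorem dim_modularForm_eq_card (k : ℤ) (hk : 0 ≤ k) :
    Module.finrank ℂ (ModularForm (CongruenceSubgroup.Gamma 1) k) =
      Nat.card {p : ℕ × ℕ // 4 * (p.1 : ℤ) + 6 * (p.2 : ℤ) = k} := by
  rw [finrank_aux _ CongruenceSubgroup.Gamma_one_coe_eq_SL]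
  rcases Int.even_or_odd k with he | ho
  · lift k to ℕ using hk
    have he' : Even k := mod_cast he
    rw [card_aux k he']
    apply Module.finrank_eq_of_rank_eq
    rw [ModularForm.dimension_level_one k he']
  · have : IsEmpty {p : ℕ × ℕ // 4 * (p.1 : ℤ) + 6 * (p.2 : ℤ) = k} := by
      refine ⟨fun p => ?_⟩
      have := p.2
      obtain ⟨t, rfl⟩ := ho
      omega
    rw [Nat.card_of_isEmpty]
    apply Module.finrank_eq_of_rank_eq
    rw [ModularForm.levelOne_odd_weight_rank_zero ho]
    simp
end

section
/- In the formal power series ring ℤ⟦t⟦, one has (∑_{k=0}^∞ (dim_ℂ M_k) t^k) · (1 − t⁴) · (1 − t⁶) = 1; equivalently, the generating function of the dimensions of the spaces of level-one modular forms is 1/((1−t⁴)(1−t⁶)). (This is Proposition 2(a) in generating-function form.) -/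
open scoped MatrixGroups in
lemma aux_finrank (k : ℕ) :
    (Module.finrank ℂ (ModularForm (CongruenceSubgroup.Gamma 1) (k : ℤ)) : ℤ) =
      if k % 2 = 1 then 0 else if k % 12 = 2 then (k / 12 : ℕ) else (k / 12 + 1 : ℕ) := by
  have key : ∀ (G H : Subgroup (GL (Fin 2) ℝ)) [G.HasDetOne] [H.HasDetOne], G = H →
      Module.finrank ℂ (ModularForm G (k : ℤ)) = Module.finrank ℂ (ModularForm H (k : ℤ)) := by
    intro G H _ _ hGH
    subst hGH
    rfl
  rw [key _ _ CongruenceSubgroup.Gamma_one_coe_eq_SL]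
  by_cases h1 : k % 2 = 1
  · rw [if_pos h1, Module.finrank, ModularForm.levelOne_odd_weight_rank_zero]
    · simp
    · exact_mod_cast Nat.odd_iff.mpr h1
  · rw [if_neg h1, Module.finrank,
      ModularForm.dimension_level_one k (Nat.even_iff.mpr (by omega))]
    by_cases h2 : k % 12 = 2
    · simp [h2, Nat.ModEq]
    · simp [h2, Nat.ModEq]

/-- **Generating function of dimensions of level-one modular forms** (Proposition 2(a)):
in `ℤ⟦t⟧` one has `(∑ₖ dim_ℂ M_k · tᵏ) · (1 − t⁴) · (1 − t⁶) = 1`, i.e. the generating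
function of the dimensions of the spaces of modular forms for the full modular group is
`1 / ((1 − t⁴)(1 − t⁶))`. -/
theorem modularForm_dim_generating_function :
    (PowerSeries.mk fun k : ℕ =>
        (Module.finrank ℂ (ModularForm (CongruenceSubgroup.Gamma 1) (k : ℤ)) : ℤ)) *
      (1 - PowerSeries.X ^ 4) * (1 - PowerSeries.X ^ 6) = 1 := by
  simp only [aux_finrank]
  generalize hf : (PowerSeries.mk fun k : ℕ => (_ : ℤ)) = f
  have e : f * (1 - PowerSeries.X ^ 4) * (1 - PowerSeries.X ^ 6) =
      f - f * PowerSeries.X ^ 4 - f * PowerSeries.X ^ 6 + f * PowerSeries.X ^ 10 := by ring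
  rw [e]
  ext n
  simp only [map_add, map_sub, PowerSeries.coeff_mul_X_pow', PowerSeries.coeff_one, ← hf,
    PowerSeries.coeff_mk]
  by_cases hn : n < 10
  · interval_cases n <;> simp
  · have h4 : 4 ≤ n := by omega
    have h6 : 6 ≤ n := by omega
    have h10 : 10 ≤ n := by omega
    have h0 : n ≠ 0 := by omega
    simp only [h4, h6, h10, h0, if_true, if_false]
    obtain ⟨m, rfl⟩ := Nat.exists_eq_add_of_le h10
    split_ifs <;> omega
end

section
/- For every integer k ≥ 0, the family of modular forms E₄^a · E₆^b, indexed by the pairs (a,b) of nonnegative integers with 4a + 6b = k, is a basis of the complex vector space M_k of level-one modular forms of weight k. In particular, the graded ring of level-one modular forms is the polynomial ring generated by the Eisenstein series E₄ and E₆ of weights 4 and 6, and E₄, E₆ are algebraically independent over ℂ. -/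
open scoped MatrixGroups

/-- Transport a modular form along an equality of weights. -/
def ModularForm.castWeight {Γ : Subgroup SL(2, ℤ)} {k k' : ℤ} (h : k = k')
    (f : ModularForm Γ k) : ModularForm Γ k' := h ▸ f

/-- The `n`-th power of a modular form of weight `k`, a modular form of weight `n * k`. -/
noncomputable def ModularForm.natPow {Γ : Subgroup SL(2, ℤ)} {k : ℤ}
    (f : ModularForm Γ k) : (n : ℕ) → ModularForm Γ (n * k)
  | 0 => ModularForm.castWeight (by simp) (1 : ModularForm Γ 0)
  | n + 1 => ModularForm.castWeight (by push_cast; ring) ((ModularForm.natPow f n).mul f)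

/-- The level-one Eisenstein series of weight 4. -/
noncomputable def E₄ : ModularForm (CongruenceSubgroup.Gamma 1) 4 :=
  ModularForm.eisensteinSeries_MF (by norm_num) (0 : Fin 2 → ZMod (1 : ℕ+))

/-- The level-one Eisenstein series of weight 6. -/
noncomputable def E₆ : ModularForm (CongruenceSubgroup.Gamma 1) 6 :=
  ModularForm.eisensteinSeries_MF (by norm_num) (0 : Fin 2 → ZMod (1 : ℕ+))

/-- The family `E₄^a · E₆^b`, indexed by pairs `(a, b)` of nonnegative integers with
`4a + 6b = k`, regarded as elements of the space of weight-`k` level-one modular forms. -/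
noncomputable def eisensteinMonomial (k : ℤ)
    (p : {p : ℕ × ℕ // 4 * (p.1 : ℤ) + 6 * (p.2 : ℤ) = k}) :
    ModularForm (CongruenceSubgroup.Gamma 1) k :=
  ModularForm.castWeight (by have h := p.2; omega)
    ((ModularForm.natPow E₄ p.1.1).mul (ModularForm.natPow E₆ p.1.2))

lemma castWeight_coe' {Γ : Subgroup SL(2, ℤ)} {k k' : ℤ} (h : k = k')
    (f : ModularForm Γ k) : ⇑(ModularForm.castWeight h f) = ⇑f := by
  subst h; rfl

lemma natPow_coe' {Γ : Subgroup SL(2, ℤ)} {k : ℤ}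
    (f : ModularForm Γ k) (n : ℕ) : ⇑(ModularForm.natPow f n) = ⇑f ^ n := by
  induction n with
  | zero => rw [ModularForm.natPow, castWeight_coe', pow_zero]; rfl
  | succ n ih => rw [ModularForm.natPow, castWeight_coe', ModularForm.coe_mul, ih, pow_succ]

lemma E₄_coe' : ⇑E₄ = (2 : ℂ) • ⇑ModularForm.E₄ := by
  ext z
  change E₄ z = 2 * ((1 / 2 : ℂ) * E₄ z)
  ring

lemma E₆_coe' : ⇑E₆ = (2 : ℂ) • ⇑ModularForm.E₆ := by
  ext z
  change E₆ z = 2 * ((1 / 2 : ℂ) * E₆ z)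
  ring

lemma eisensteinMonomial_coe' (k : ℤ) (p) :
    ⇑(eisensteinMonomial k p) =
      (2 ^ p.1.1 * 2 ^ p.1.2 : ℂ) • (⇑ModularForm.E₄ ^ p.1.1 * ⇑ModularForm.E₆ ^ p.1.2) := by
  rw [eisensteinMonomial, castWeight_coe', ModularForm.coe_mul, natPow_coe', natPow_coe',
    E₄_coe', E₆_coe', smul_pow, smul_pow, smul_mul_smul_comm]

/-- The span of monomials, as functions. -/
noncomputable def monSpan (k : ℤ) : Submodule ℂ (UpperHalfPlane → ℂ) :=
  Submodule.span ℂ {g | ∃ a b : ℕ, 4 * (a : ℤ) + 6 * (b : ℤ) = k ∧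
    g = ⇑ModularForm.E₄ ^ a * ⇑ModularForm.E₆ ^ b}

lemma mon_mem (k : ℤ) (a b : ℕ) (h : 4 * (a : ℤ) + 6 * (b : ℤ) = k) :
    ⇑ModularForm.E₄ ^ a * ⇑ModularForm.E₆ ^ b ∈ monSpan k :=
  Submodule.subset_span ⟨a, b, h, rfl⟩

lemma disc_mul_mem (k : ℤ) (g : UpperHalfPlane → ℂ) (hg : g ∈ monSpan (k - 12)) :
    ModularForm.discriminant * g ∈ monSpan k := by
  induction hg using Submodule.span_induction with
  | mem x hx =>
    obtain ⟨a, b, hab, rfl⟩ := hx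
    have : ModularForm.discriminant * (⇑ModularForm.E₄ ^ a * ⇑ModularForm.E₆ ^ b) =
      (1 / 1728 : ℂ) • (⇑ModularForm.E₄ ^ (a + 3) * ⇑ModularForm.E₆ ^ b
        - ⇑ModularForm.E₄ ^ a * ⇑ModularForm.E₆ ^ (b + 2)) := by
      ext z
      simp only [Pi.mul_apply, Pi.pow_apply, Pi.smul_apply, Pi.sub_apply, smul_eq_mul,
        ModularForm.discriminant_eq_E₄_cube_sub_E₆_sq z]
      ring
    rw [this]
    exact Submodule.smul_mem _ _ (Submodule.sub_mem _ (mon_mem _ _ _ (by push_cast; linarith))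
      (mon_mem _ _ _ (by push_cast; linarith)))
  | zero => rw [mul_zero]; exact Submodule.zero_mem _
  | add x y _ _ hx hy => rw [mul_add]; exact Submodule.add_mem _ hx hy
  | smul c x _ hx => rw [mul_smul_comm]; exact Submodule.smul_mem _ _ hx

open ModularForm in
lemma mem_monSpan (n : ℕ) : ∀ f : ModularForm 𝒮ℒ (n : ℤ), ⇑f ∈ monSpan n := by
  induction n using Nat.strong_induction_on with | h n ih =>
  intro f
  by_cases hodd : Odd (n : ℤ)
  · rw [levelOne_odd_weight_eq_zero hodd f]; exact Submodule.zero_mem _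
  have heven : Even n := by
    rw [Int.not_odd_iff_even] at hodd; exact_mod_cast hodd
  by_cases h2 : n = 2
  · subst h2
    have : f = 0 := rank_zero_iff_forall_zero.mp levelOne_weight_two_rank_zero f
    rw [this]; exact Submodule.zero_mem _
  obtain ⟨a, b, hab⟩ : ∃ a b : ℕ, 4 * a + 6 * b = n := by
    obtain ⟨m, rfl⟩ := heven
    rcases Nat.even_or_odd m with ⟨j, hj⟩ | ⟨j, hj⟩
    · exact ⟨j, 0, by omega⟩
    · exact ⟨j - 1, 1, by omega⟩
  let g : ModularForm 𝒮ℒ (n : ℤ) := ModularForm.mcast (by push_cast [← hab]; ring)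
    ((ModularForm.E₄.pow a).mul (ModularForm.E₆.pow b))
  have hgc : ⇑g = ⇑ModularForm.E₄ ^ a * ⇑ModularForm.E₆ ^ b := by
    simp only [g, coe_mcast, coe_mul, coe_pow]
  have hg : (UpperHalfPlane.qExpansion 1 g).coeff 0 = 1 := by
    simp only [g, coe_mcast]
    rw [ModularForm.qExpansion_mul one_pos one_mem_strictPeriods_SL,
      ModularForm.qExpansion_pow one_pos one_mem_strictPeriods_SL,
      ModularForm.qExpansion_pow one_pos one_mem_strictPeriods_SL]
    have h4 := EisensteinSeries.E_qExpansion_coeff_zero (k := 4) (by norm_num) ⟨2, rfl⟩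
    have h6 := EisensteinSeries.E_qExpansion_coeff_zero (k := 6) (by norm_num) ⟨3, rfl⟩
    simp only [PowerSeries.coeff_zero_eq_constantCoeff] at h4 h6 ⊢
    rw [map_mul, map_pow, map_pow]
    erw [h4, h6]
    simp
  set c := (UpperHalfPlane.qExpansion 1 f).coeff 0
  obtain ⟨s, hs⟩ := sub_smul_isCuspForm f g hg
  have hs' : ⇑f = c • ⇑g + ⇑s := by
    have : (s : UpperHalfPlane → ℂ) = ⇑f - c • ⇑g := congrArg DFunLike.coe hs
    rw [this]; abel
  rw [hs']
  refine Submodule.add_mem _ (Submodule.smul_mem _ _ (hgc ▸ mon_mem _ _ _ (by exact_mod_cast hab))) ?_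
  rw [← discriminant_mul_discriminantEquiv s]
  apply disc_mul_mem
  by_cases h12 : n < 12
  · rw [ModularFormClass.levelOne_neg_weight_eq_zero (k := (n : ℤ) - 12) (by omega)]
    exact Submodule.zero_mem _
  · obtain ⟨m, rfl⟩ : ∃ m, n = m + 12 := ⟨n - 12, by omega⟩
    have e : ((m + 12 : ℕ) : ℤ) - 12 = m := by push_cast; ring
    have := ih m (by omega) (ModularForm.mcast e (CuspForm.discriminantEquiv s))
    rw [coe_mcast] at this
    have e' : monSpan (((m + 12 : ℕ) : ℤ) - 12) = monSpan m := congrArg monSpan e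
    exact e'.ge this

/-- Level-one forms for the two descriptions of the level. -/
noncomputable def levelEquiv (k : ℤ) :
    ModularForm (CongruenceSubgroup.Gamma 1) k ≃ₗ[ℂ] ModularForm 𝒮ℒ k where
  toFun f := f.copy _ rfl CongruenceSubgroup.Gamma_one_coe_eq_SL.symm
  invFun f := f.copy _ rfl CongruenceSubgroup.Gamma_one_coe_eq_SL
  left_inv f := rfl
  right_inv f := rfl
  map_add' f g := rfl
  map_smul' c f := rfl

/-- **Monomials in `E₄`, `E₆` form a basis** (Proposition 2(a)): for every integer `k ≥ 0`,
the family of modular forms `E₄^a · E₆^b`, indexed by pairs `(a, b) ∈ ℕ × ℕ` with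
`4a + 6b = k`, is a basis (linearly independent and spanning) of the complex vector space
of level-one modular forms of weight `k`. -/
theorem eisensteinMonomial_linearIndependent_and_span (k : ℤ) (hk : 0 ≤ k) :
    LinearIndependent ℂ (eisensteinMonomial k) ∧
      Submodule.span ℂ (Set.range (eisensteinMonomial k)) = ⊤ := by
  obtain ⟨n, rfl⟩ := Int.eq_ofNat_of_zero_le hk
  have hspan : Submodule.span ℂ (Set.range (eisensteinMonomial n)) = ⊤ := by
    rw [eq_top_iff]
    intro f _
    have hf : ⇑f ∈ monSpan n := mem_monSpan n (levelEquiv n f)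
    let L : ModularForm (CongruenceSubgroup.Gamma 1) n →ₗ[ℂ] (UpperHalfPlane → ℂ) :=
      { toFun := fun f => ⇑f, map_add' := fun _ _ => rfl, map_smul' := fun _ _ => rfl }
    have hL : Function.Injective L := DFunLike.coe_injective
    have hle : monSpan n ≤ (Submodule.span ℂ (Set.range (eisensteinMonomial n))).map L := by
      refine Submodule.span_le.mpr ?_
      rintro _ ⟨a, b, hab, rfl⟩
      refine ⟨(2 ^ a * 2 ^ b : ℂ)⁻¹ • eisensteinMonomial n ⟨(a, b), hab⟩,
        Submodule.smul_mem _ _ (Submodule.subset_span ⟨_, rfl⟩), ?_⟩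
      rw [map_smul]
      change _ • ⇑(eisensteinMonomial n ⟨(a, b), hab⟩) = _
      rw [eisensteinMonomial_coe', smul_smul, inv_mul_cancel₀ (by simp), one_smul]
    obtain ⟨g, hg, hgf⟩ := hle hf
    exact hL hgf ▸ hg
  refine ⟨?_, hspan⟩
  by_cases heven : Even n
  swap
  · have : IsEmpty {p : ℕ × ℕ // 4 * (p.1 : ℤ) + 6 * (p.2 : ℤ) = n} := by
      refine ⟨fun ⟨p, hp⟩ => heven ?_⟩
      rw [Nat.even_iff]; omega
    exact linearIndependent_empty_type
  obtain ⟨d, hdd⟩ : ∃ d, d = if n ≡ 2 [MOD 12] then n / 12 else n / 12 + 1 := ⟨_, rfl⟩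
  have hd : Module.finrank ℂ (ModularForm (CongruenceSubgroup.Gamma 1) n) = d := by
    rw [(levelEquiv n).finrank_eq, Module.finrank_eq_of_rank_eq (n := d)]
    rw [ModularForm.dimension_level_one n heven]
    rw [hdd]
  have hlt : ∀ p : {p : ℕ × ℕ // 4 * (p.1 : ℤ) + 6 * (p.2 : ℤ) = n}, p.1.2 / 2 < d := by
    rintro ⟨⟨a, b⟩, hp⟩
    have hp' : 4 * a + 6 * b = n := by exact_mod_cast hp
    change b / 2 < d
    clear hp hd hspan hk
    by_cases h : n ≡ 2 [MOD 12]
    · rw [if_pos h] at hdd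
      unfold Nat.ModEq at h
      omega
    · rw [if_neg h] at hdd
      unfold Nat.ModEq at h
      omega
  let φ : {p : ℕ × ℕ // 4 * (p.1 : ℤ) + 6 * (p.2 : ℤ) = n} → Fin d := fun p => ⟨_, hlt p⟩
  have hφ : Function.Injective φ := by
    rintro ⟨⟨a, b⟩, hp⟩ ⟨⟨a', b'⟩, hp'⟩ h
    simp only [φ, Fin.mk.injEq] at h hp hp'
    simp only [Subtype.mk.injEq, Prod.mk.injEq]
    omega
  have : Finite {p : ℕ × ℕ // 4 * (p.1 : ℤ) + 6 * (p.2 : ℤ) = n} := Finite.of_injective φ hφ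
  have := Fintype.ofFinite {p : ℕ × ℕ // 4 * (p.1 : ℤ) + 6 * (p.2 : ℤ) = n}
  refine linearIndependent_of_top_le_span_of_card_le_finrank hspan.ge ?_
  rw [hd]
  simpa using Fintype.card_le_of_injective φ hφ
end

section
/- Define c : ℤ → ℤ by c(k) = #{(a,b) ∈ ℕ×ℕ : 4a + 6b = k} for k ≥ 0, and c(k) = −#{(a,b) ∈ ℕ×ℕ : 4a + 6b = −k − 10} for k < 0. Then the formal power series F(q,r) := ∑_{a,b ≥ 0} c(b − a) q^a r^b in ℤ⟦q,r⟧ satisfies F(q,r) · (1 − qr)(1 − q⁴)(1 − q⁶)(1 − r⁴)(1 − r⁶) = (1 − q⁴)(1 − q⁶) − q^{10} (1 − r⁴)(1 − r⁶); equivalently F(q,r) = (1/(1−qr)) · ( 1/((1−r⁴)(1−r⁶)) − q^{10}/((1−q⁴)(1−q⁶)) ). (This is the combinatorial form of the Corollary computing χ(M̄_{1,1}, 1/((1−q L₁^{−1})(1−q₁ L₁))), where c(k) = χ(M̄_{1,1}, L₁^{⊗k}).) -/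
open MvPowerSeries

noncomputable def NN (k : ℤ) : ℤ := Nat.card {p : ℕ × ℕ // 4 * (p.1 : ℤ) + 6 * (p.2 : ℤ) = k}

def DD (k : ℤ) : ℤ := if 0 ≤ k ∧ 4 ∣ k then 1 else 0

lemma fin_NN (k : ℤ) : Finite {p : ℕ × ℕ // 4 * (p.1 : ℤ) + 6 * (p.2 : ℤ) = k} := by
  apply Set.Finite.to_subtype (s := {p : ℕ × ℕ | 4 * (p.1 : ℤ) + 6 * (p.2 : ℤ) = k})
  apply (Set.finite_Iic ((k.toNat, k.toNat) : ℕ × ℕ)).subset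
  rintro ⟨a, b⟩ h
  simp only [Set.mem_ofPred_eq] at h
  simp only [Set.mem_Iic, Prod.mk_le_mk]
  omega

lemma NN_neg (k : ℤ) (hk : k < 0) : NN k = 0 := by
  have : IsEmpty {p : ℕ × ℕ // 4 * (p.1 : ℤ) + 6 * (p.2 : ℤ) = k} := ⟨fun ⟨p, h⟩ => by omega⟩
  simp [NN]

lemma card_four (k : ℤ) : (Nat.card {a : ℕ // 4 * (a : ℤ) = k} : ℤ) = DD k := by
  unfold DD
  split_ifs with h
  · obtain ⟨h0, m, rfl⟩ := h
    have : Unique {a : ℕ // 4 * (a : ℤ) = 4 * m} :=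
      ⟨⟨⟨m.toNat, by omega⟩⟩, fun ⟨a, ha⟩ => Subtype.ext (by
        change a = m.toNat
        omega)⟩
    rw [Nat.card_unique]
    rfl
  · have : IsEmpty {a : ℕ // 4 * (a : ℤ) = k} := ⟨fun ⟨p, hp⟩ => h (by omega)⟩
    simp

lemma NN_rec (k : ℤ) : NN k = NN (k - 6) + DD k := by
  have := fin_NN (k - 6)
  have h4 : Finite {a : ℕ // 4 * (a : ℤ) = k} := by
    apply Set.Finite.to_subtype (s := {a : ℕ | 4 * (a : ℤ) = k})
    apply (Set.finite_Iic (k.toNat)).subset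
    intro a h
    simp only [Set.mem_ofPred_eq] at h
    simp only [Set.mem_Iic]
    omega
  rw [← card_four, NN, NN, ← Nat.cast_add, ← Nat.card_sum]
  congr 1
  symm
  apply Nat.card_eq_of_bijective (Sum.elim
    (fun p => (⟨(p.1.1, p.1.2 + 1), by have := p.2; push_cast; omega⟩ :
      {p : ℕ × ℕ // 4 * (p.1 : ℤ) + 6 * (p.2 : ℤ) = k}))
    (fun a => ⟨(a.1, 0), by have := a.2; push_cast; omega⟩))
  constructor
  · rintro (⟨⟨a, b⟩, h⟩ | ⟨a, h⟩) (⟨⟨a', b'⟩, h'⟩ | ⟨a', h'⟩) <;> simp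
  · rintro ⟨⟨a, _ | b⟩, h⟩
    · exact ⟨Sum.inr ⟨a, by simpa using h⟩, rfl⟩
    · exact ⟨Sum.inl ⟨(a, b), by push_cast at h ⊢; omega⟩, rfl⟩

lemma DD_rec (k : ℤ) : DD k = DD (k - 4) + if k = 0 then 1 else 0 := by
  unfold DD
  split_ifs <;> omega

def SS (f : ℤ → ℤ → ℤ) : MvPowerSeries (Fin 2) ℤ := fun n => f (n 0) (n 1)

lemma coeff_SS (f : ℤ → ℤ → ℤ) (n : Fin 2 →₀ ℕ) : coeff n (SS f) = f (n 0) (n 1) := rfl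

lemma SS_mul (f : ℤ → ℤ → ℤ) (hf : ∀ a b, a < 0 ∨ b < 0 → f a b = 0) (i j : ℕ) :
    SS f * (X 0 ^ i * X 1 ^ j) = SS (fun a b => f (a - i) (b - j)) := by
  ext n
  rw [X_pow_eq, X_pow_eq, monomial_mul_monomial, coeff_mul_monomial, coeff_SS, coeff_SS]
  have hle : (Finsupp.single (0 : Fin 2) i + Finsupp.single 1 j ≤ n) ↔ i ≤ n 0 ∧ j ≤ n 1 := by
    rw [Finsupp.le_def, Fin.forall_fin_two]
    simp
  split_ifs with h
  · have h' := hle.1 h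
    simp [Nat.cast_sub h'.1, Nat.cast_sub h'.2]
  · rw [hle] at h
    rw [hf _ _ (by omega)]

lemma SS_one : (1 : MvPowerSeries (Fin 2) ℤ) = SS (fun a b => if a = 0 ∧ b = 0 then 1 else 0) := by
  ext n
  rw [coeff_SS, coeff_one]
  congr 1
  simp [Finsupp.ext_iff, Fin.forall_fin_two]

lemma SS_sub (f g : ℤ → ℤ → ℤ) : SS f - SS g = SS (fun a b => f a b - g a b) := rfl

lemma SS_congr (f g : ℤ → ℤ → ℤ) (h : ∀ a b, 0 ≤ a → 0 ≤ b → f a b = g a b) : SS f = SS g := by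
  ext n
  exact h _ _ (by positivity) (by positivity)

lemma DD_neg (k : ℤ) (hk : k < 0) : DD k = 0 := by
  unfold DD
  split_ifs <;> omega

noncomputable def AA : MvPowerSeries (Fin 2) ℤ := SS (fun a b => if a = 0 then NN b else 0)
noncomputable def BB : MvPowerSeries (Fin 2) ℤ := SS (fun a b => if b = 0 then NN a else 0)

lemma AA_eq : AA * ((1 - X 1 ^ 4) * (1 - X 1 ^ 6)) = 1 := by
  have h1 : AA - AA * (X 0 ^ 0 * X 1 ^ 6) = SS (fun a b => if a = 0 then DD b else 0) := by
    rw [AA, SS_mul _ (by intro a b h; have := NN_neg b; grind), SS_sub]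
    apply SS_congr
    intro a b _ _
    have := NN_rec b
    push_cast
    grind
  have h2 : SS (fun a b => if a = 0 then DD b else 0) -
      SS (fun a b => if a = 0 then DD b else 0) * (X 0 ^ 0 * X 1 ^ 4) = 1 := by
    rw [SS_mul _ (by intro a b h; have := DD_neg b; grind), SS_sub, SS_one]
    apply SS_congr
    intro a b _ _
    have := DD_rec b
    push_cast
    grind
  linear_combination (1 - X 1 ^ 4) * h1 + h2

lemma BB_eq : BB * ((1 - X 0 ^ 4) * (1 - X 0 ^ 6)) = 1 := by
  have h1 : BB - BB * (X 0 ^ 6 * X 1 ^ 0) = SS (fun a b => if b = 0 then DD a else 0) := by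
    rw [BB, SS_mul _ (by intro a b h; have := NN_neg a; grind), SS_sub]
    apply SS_congr
    intro a b _ _
    have := NN_rec a
    push_cast
    grind
  have h2 : SS (fun a b => if b = 0 then DD a else 0) -
      SS (fun a b => if b = 0 then DD a else 0) * (X 0 ^ 4 * X 1 ^ 0) = 1 := by
    rw [SS_mul _ (by intro a b h; have := DD_neg a; grind), SS_sub, SS_one]
    apply SS_congr
    intro a b _ _
    have := DD_rec a
    push_cast
    grind
  linear_combination (1 - X 0 ^ 4) * h1 + h2

/-- **Corollary (combinatorial form)**: let `c k` be the number of pairs `(a,b) ∈ ℕ × ℕ` with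
`4a + 6b = k` for `k ≥ 0`, and `c k = -#{(a,b) : 4a + 6b = -k - 10}` for `k < 0`.  If
`F = ∑_{a,b ≥ 0} c (b - a) qᵃ rᵇ` in `ℤ⟦q,r⟧` (with `q = X 0`, `r = X 1`), then
`F · (1 − qr)(1 − q⁴)(1 − q⁶)(1 − r⁴)(1 − r⁶) = (1 − q⁴)(1 − q⁶) − q¹⁰ (1 − r⁴)(1 − r⁶)`,
i.e. `F = (1/(1−qr)) · (1/((1−r⁴)(1−r⁶)) − q¹⁰/((1−q⁴)(1−q⁶)))`. -/
theorem corollary_combinatorial (c : ℤ → ℤ)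
    (hc_nonneg : ∀ k : ℤ, 0 ≤ k →
      c k = Nat.card {p : ℕ × ℕ // 4 * (p.1 : ℤ) + 6 * (p.2 : ℤ) = k})
    (hc_neg : ∀ k : ℤ, k < 0 →
      c k = -(Nat.card {p : ℕ × ℕ // 4 * (p.1 : ℤ) + 6 * (p.2 : ℤ) = -k - 10} : ℤ))
    (F : MvPowerSeries (Fin 2) ℤ)
    (hF : ∀ a b : ℕ,
      MvPowerSeries.coeff (R := ℤ) (Finsupp.single 0 a + Finsupp.single 1 b) F = c ((b : ℤ) - a)) :
    F * ((1 - X 0 * X 1) * ((1 - X 0 ^ 4) * ((1 - X 0 ^ 6) *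
        ((1 - X 1 ^ 4) * (1 - X 1 ^ 6))))) =
      (1 - X 0 ^ 4) * (1 - X 0 ^ 6) - X 0 ^ 10 * ((1 - X 1 ^ 4) * (1 - X 1 ^ 6)) := by
  have hF' : F = SS (fun a b => if a < 0 ∨ b < 0 then 0 else c (b - a)) := by
    ext n
    have hn : n = Finsupp.single 0 (n 0) + Finsupp.single 1 (n 1) := by
      ext i
      fin_cases i <;> simp
    rw [coeff_SS, if_neg (by omega), ← hF, ← hn]
  have key : F - F * (X 0 ^ 1 * X 1 ^ 1) = AA - BB * (X 0 ^ 10 * X 1 ^ 0) := by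
    rw [hF', AA, BB, SS_mul _ (by intro a b h; simp [h]),
      SS_mul _ (by intro a b h; have := NN_neg a; grind), SS_sub, SS_sub]
    apply SS_congr
    intro a b ha hb
    have e1 : ∀ k, 0 ≤ k → c k = NN k := hc_nonneg
    have e2 : ∀ k, k < 0 → c k = - NN (-k - 10) := hc_neg
    push_cast
    have h3 : b - 1 - (a - 1) = b - a := by ring
    rw [h3]
    rcases ha.eq_or_lt with rfl | ha
    · have := NN_neg (-10) (by norm_num)
      have := e1 b hb
      simp only [sub_zero, zero_sub]
      grind
    · rcases hb.eq_or_lt with rfl | hb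
      · have := e2 (-a) (by omega)
        simp only [sub_zero, zero_sub, neg_neg] at *
        grind
      · grind
  have hA := AA_eq
  have hB := BB_eq
  linear_combination ((1 - X 0 ^ 4) * ((1 - X 0 ^ 6) *
        ((1 - X 1 ^ 4) * (1 - X 1 ^ 6)))) * key + (1 - X 0 ^ 4) * (1 - X 0 ^ 6) * hA
        - X 0 ^ 10 * ((1 - X 1 ^ 4) * (1 - X 1 ^ 6)) * hB
end

section
/- In the ring of formal power series over ℚ in the variables q, q₁, q₂, the series Φ₂ := (q₁ q₂ / ((1−q₁)(1−q₂))) · [ 1/(24(1−q)(1−q₁)(1−q₂)) + (1/((1+q)(1+q₁)(1+q₂))) · ( 3/8 + (1/4)( q/(1+q) − q₁/(1+q₁) − q₂/(1+q₂) ) ) + (1 − q + q₁ + q₂ + q q₁ + q q₂ − q₁ q₂ + q q₁ q₂) / (4(1+q²)(1+q₁²)(1+q₂²)) + (1 − q + 2q₁ + 2q₂ + q q₁ + q q₂ + q₁ q₂ − q q₁ q₂) / (3(1+q+q²)(1+q₁+q₁²)(1+q₂+q₂²)) ] has all of its coefficients in ℤ. (This is the integrality, asserted in the paper, of the generating function of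 Proposition 3 for n = 2: the sum of the main contribution and the orbifold contribution Σ₂ computes integer Euler characteristics on M̄_{1,2}.) -/
open MvPowerSeries

set_option maxHeartbeats 4000000 in
/-- Coefficient 0. -/
def ppC0 {R : Type*} [CommRing R] (y z : R) : R :=
    1 + 2 * z + 2 * z^2 - z^4 - 2 * z^5 - z^6 + 2 * y + 4 * y * z + 3 * y * z^2 - 2 * y * z^4 - 3 * y * z^5 - y * z^6 + 2 * y^2 + 3 * y^2 * z + 2 * y^2 * z^2 - y^2 * z^4 - y^2 * z^5 + y^3 * z^3 + 2 * y^3 * z^4 + 2 * y^3 * z^5 + y^3 * z^6 - y^4 - 2 * y^4 * z - y^4 * z^2 + 2 * y^4 * z^3 + 3 * y^4 * z^4 + 3 * y^4 * z^5 + y^4 * z^6 - 2 * y^5 - 3 * y^5 * z - y^5 * z^2 + 2 * y^5 * z^3 + 3 * y^5 * z^4 + 3 * y^5 * z^5 + y^5 * z^6 - y^6 - y^6 * z + y^6 * z^3 + y^6 * z^4 + y^6 * z^5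

set_option maxHeartbeats 4000000 in
/-- Coefficient 1. -/
def ppC1 {R : Type*} [CommRing R] (y z : R) : R :=
    1 + 3 * z + 4 * z^2 + z^3 - z^4 - 3 * z^5 - 2 * z^6 + 3 * y + 7 * y * z + 7 * y * z^2 + 2 * y * z^3 - 3 * y * z^4 - 5 * y * z^5 - 2 * y * z^6 + 4 * y^2 + 7 * y^2 * z + 6 * y^2 * z^2 + 2 * y^2 * z^3 - 2 * y^2 * z^4 - 2 * y^2 * z^5 + y^3 + 2 * y^3 * z + 2 * y^3 * z^2 + 3 * y^3 * z^3 + 4 * y^3 * z^4 + 4 * y^3 * z^5 + 2 * y^3 * z^6 - y^4 - 3 * y^4 * z - 2 * y^4 * z^2 + 4 * y^4 * z^3 + 7 * y^4 * z^4 + 7 * y^4 * z^5 + 3 * y^4 * z^6 - 3 * y^5 - 5 * y^5 * z - 2 * y^5 * z^2 + 4 * y^5 * z^3 + 7 * y^5 * z^4 + 6 * y^5 * z^5 + 2 * y^5 * z^6 - 2 * y^6 - 2 * y^6 * z + 2 * y^6 * z^3 + 3 * y^6 * z^4 + 2 * y^6 * z^5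

set_option maxHeartbeats 4000000 in
/-- Coefficient 2. -/
def ppC2 {R : Type*} [CommRing R] (y z : R) : R :=
    z + 3 * z^2 + 2 * z^3 + z^4 - z^5 - z^6 + y + 4 * y * z + 7 * y * z^2 + 5 * y * z^3 + y * z^4 - 2 * y * z^5 - y * z^6 + 3 * y^2 + 7 * y^2 * z + 9 * y^2 * z^2 + 6 * y^2 * z^3 + y^2 * z^4 - y^2 * z^5 + 2 * y^3 + 5 * y^3 * z + 6 * y^3 * z^2 + 6 * y^3 * z^3 + 5 * y^3 * z^4 + 4 * y^3 * z^5 + 2 * y^3 * z^6 + y^4 + y^4 * z + y^4 * z^2 + 5 * y^4 * z^3 + 7 * y^4 * z^4 + 7 * y^4 * z^5 + 3 * y^4 * z^6 - y^5 - 2 * y^5 * z - y^5 * z^2 + 4 * y^5 * z^3 + 7 * y^5 * z^4 + 6 * y^5 * z^5 + 2 * y^5 * z^6 - y^6 - y^6 * z + 2 * y^6 * z^3 + 3 * y^6 * z^4 + 2 * y^6 * z^5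

set_option maxHeartbeats 4000000 in
/-- Coefficient 3. -/
def ppC3 {R : Type*} [CommRing R] (y z : R) : R :=
    z^2 + 2 * z^3 + 2 * z^4 + z^5 + y * z + 4 * y * z^2 + 6 * y * z^3 + 5 * y * z^4 + 2 * y * z^5 + y^2 + 4 * y^2 * z + 8 * y^2 * z^2 + 9 * y^2 * z^3 + 6 * y^2 * z^4 + 2 * y^2 * z^5 + 2 * y^3 + 6 * y^3 * z + 9 * y^3 * z^2 + 9 * y^3 * z^3 + 6 * y^3 * z^4 + 3 * y^3 * z^5 + y^3 * z^6 + 2 * y^4 + 5 * y^4 * z + 6 * y^4 * z^2 + 6 * y^4 * z^3 + 5 * y^4 * z^4 + 4 * y^4 * z^5 + 2 * y^4 * z^6 + y^5 + 2 * y^5 * z + 2 * y^5 * z^2 + 3 * y^5 * z^3 + 4 * y^5 * z^4 + 4 * y^5 * z^5 + 2 * y^5 * z^6 + y^6 * z^3 + 2 * y^6 * z^4 + 2 * y^6 * z^5 + y^6 * z^6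

set_option maxHeartbeats 4000000 in
/-- Coefficient 4. -/
def ppC4 {R : Type*} [CommRing R] (y z : R) : R :=
    -1 - 2 * z - 2 * z^2 + z^3 + 3 * z^4 + 4 * z^5 + 2 * z^6 - 2 * y - 4 * y * z - 2 * y * z^2 + 4 * y * z^3 + 8 * y * z^4 + 8 * y * z^5 + 3 * y * z^6 - 2 * y^2 - 2 * y^2 * z + 2 * y^2 * z^2 + 8 * y^2 * z^3 + 10 * y^2 * z^4 + 7 * y^2 * z^5 + 2 * y^2 * z^6 + y^3 + 4 * y^3 * z + 8 * y^3 * z^2 + 9 * y^3 * z^3 + 6 * y^3 * z^4 + 2 * y^3 * z^5 + 3 * y^4 + 8 * y^4 * z + 10 * y^4 * z^2 + 6 * y^4 * z^3 + y^4 * z^4 - 2 * y^4 * z^5 - y^4 * z^6 + 4 * y^5 + 8 * y^5 * z + 7 * y^5 * z^2 + 2 * y^5 * z^3 - 2 * y^5 * z^4 - 3 * y^5 * z^5 - y^5 * z^6 + 2 * y^6 + 3 * y^6 * z + 2 * y^6 * z^2 - y^6 * z^4 - y^6 * z^5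

set_option maxHeartbeats 4000000 in
/-- Coefficient 5. -/
def ppC5 {R : Type*} [CommRing R] (y z : R) : R :=
    -z - 2 * z^2 + z^4 + 3 * z^5 + 2 * z^6 - y - 3 * y * z - 3 * y * z^2 + y * z^3 + 5 * y * z^4 + 7 * y * z^5 + 3 * y * z^6 - 2 * y^2 - 3 * y^2 * z - y^2 * z^2 + 4 * y^2 * z^3 + 8 * y^2 * z^4 + 7 * y^2 * z^5 + 2 * y^2 * z^6 + y^3 * z + 4 * y^3 * z^2 + 6 * y^3 * z^3 + 5 * y^3 * z^4 + 2 * y^3 * z^5 + y^4 + 5 * y^4 * z + 8 * y^4 * z^2 + 5 * y^4 * z^3 + y^4 * z^4 - 3 * y^4 * z^5 - 2 * y^4 * z^6 + 3 * y^5 + 7 * y^5 * z + 7 * y^5 * z^2 + 2 * y^5 * z^3 - 3 * y^5 * z^4 - 5 * y^5 * z^5 - 2 * y^5 * z^6 + 2 * y^6 + 3 * y^6 * z + 2 * y^6 * z^2 - 2 * y^6 * z^4 - 2 * y^6 * z^5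

set_option maxHeartbeats 4000000 in
/-- Coefficient 6. -/
def ppC6 {R : Type*} [CommRing R] (y z : R) : R :=
    -z^2 + z^5 + z^6 - y * z^2 + y * z^4 + 2 * y * z^5 + y * z^6 - y^2 - y^2 * z - y^2 * z^2 + y^2 * z^3 + 3 * y^2 * z^4 + 3 * y^2 * z^5 + y^2 * z^6 + y^3 * z^2 + 2 * y^3 * z^3 + 2 * y^3 * z^4 + y^3 * z^5 + y^4 * z + 3 * y^4 * z^2 + 2 * y^4 * z^3 + y^4 * z^4 - y^4 * z^5 - y^4 * z^6 + y^5 + 2 * y^5 * z + 3 * y^5 * z^2 + y^5 * z^3 - y^5 * z^4 - 2 * y^5 * z^5 - y^5 * z^6 + y^6 + y^6 * z + y^6 * z^2 - y^6 * z^4 - y^6 * z^5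

/-- The integral numerator polynomial. -/
def ppNum {R : Type*} [CommRing R] (x y z : R) : R :=
    x^0 * ppC0 y z + x^1 * ppC1 y z + x^2 * ppC2 y z + x^3 * ppC3 y z + x^4 * ppC4 y z + x^5 * ppC5 y z + x^6 * ppC6 y z

set_option maxHeartbeats 4000000 in
theorem ppNum_map {R S : Type*} [CommRing R] [CommRing S] (f : R →+* S) (x y z : R) :
    f (ppNum x y z) = ppNum (f x) (f y) (f z) := by
  simp only [ppNum, ppC0, ppC1, ppC2, ppC3, ppC4, ppC5, ppC6, map_add, map_sub, map_neg, map_mul, map_pow, map_one, map_ofNat]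

set_option maxHeartbeats 4000000 in
theorem ppNum_eq {R : Type*} [CommRing R] (x y z : R) :
    (1+x)^2*(1+x^2)*(1+x+x^2)*((1+y)^2*(1+y^2)*(1+y+y^2))*((1+z)^2*(1+z^2)*(1+z+z^2))
    + (9*(1+x)*(1+y)*(1+z)+6*(x*(1+y)*(1+z)-y*(1+x)*(1+z)-z*(1+x)*(1+y)))*((1-x)*(1+x^2)*(1+x+x^2))
      *((1-y)*(1+y^2)*(1+y+y^2))*((1-z)*(1+z^2)*(1+z+z^2))
    + 6*(1 - x + y + z + x * y + x * z - y * z + x * y * z)*((1-x)*(1+x)^2*(1+x+x^2))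
      *((1-y)*(1+y)^2*(1+y+y^2))*((1-z)*(1+z)^2*(1+z+z^2))
    + 8*(1 - x + 2 * y + 2 * z + x * y + x * z + y * z - x * y * z)*((1-x)*(1+x)^2*(1+x^2))
      *((1-y)*(1+y)^2*(1+y^2))*((1-z)*(1+z)^2*(1+z^2))
    = 24 * ppNum x y z := by
  simp only [ppNum, ppC0, ppC1, ppC2, ppC3, ppC4, ppC5, ppC6]
  ring

theorem one_var {R : Type*} [CommRing R] (x a b c d : R) (ha : (1 - x) * a = 1)
    (hb : (1 + x) * b = 1) (hc : (1 + x ^ 2) * c = 1) (hd : (1 + x + x ^ 2) * d = 1) :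
    a = (1+x)^2*(1+x^2)*(1+x+x^2) * (a*b^2*c*d) ∧
    b^2 = (1-x)*(1+x^2)*(1+x+x^2) * (a*b^2*c*d) ∧
    c = (1-x)*(1+x)^2*(1+x+x^2) * (a*b^2*c*d) ∧
    d = (1-x)*(1+x)^2*(1+x^2) * (a*b^2*c*d) ∧ b = (1 + x) * b^2 := by
  refine ⟨?_, ?_, ?_, ?_, ?_⟩
  · calc a = a * 1^2 * 1 * 1 := by ring
      _ = a * ((1+x)*b)^2 * ((1+x^2)*c) * ((1+x+x^2)*d) := by rw [hb, hc, hd]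
      _ = _ := by ring
  · calc b^2 = b^2 * 1 * 1 * 1 := by ring
      _ = b^2 * ((1-x)*a) * ((1+x^2)*c) * ((1+x+x^2)*d) := by rw [ha, hc, hd]
      _ = _ := by ring
  · calc c = c * 1^2 * 1 * 1 := by ring
      _ = c * ((1+x)*b)^2 * ((1-x)*a) * ((1+x+x^2)*d) := by rw [hb, ha, hd]
      _ = _ := by ring
  · calc d = d * 1^2 * 1 * 1 := by ring
      _ = d * ((1+x)*b)^2 * ((1-x)*a) * ((1+x^2)*c) := by rw [hb, ha, hc]
      _ = _ := by ring
  · linear_combination (-b) * hb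

theorem key_id {R : Type*} [CommRing R] (x y z a b c d a1 b1 c1 d1 a2 b2 c2 d2 e : R)
    (he : 24 * e = 1)
    (ha : (1 - x) * a = 1)
    (hb : (1 + x) * b = 1) (hc : (1 + x ^ 2) * c = 1) (hd : (1 + x + x ^ 2) * d = 1)
    (ha1 : (1 - y) * a1 = 1)
    (hb1 : (1 + y) * b1 = 1) (hc1 : (1 + y ^ 2) * c1 = 1) (hd1 : (1 + y + y ^ 2) * d1 = 1)
    (ha2 : (1 - z) * a2 = 1)
    (hb2 : (1 + z) * b2 = 1) (hc2 : (1 + z ^ 2) * c2 = 1) (hd2 : (1 + z + z ^ 2) * d2 = 1) :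
    (y * z * (a2 * a1)) * (e * a * a1 * a2 + b * b1 * b2 * (9 * e + 6 * e * (x * b - y * b1 - z * b2))
      + (1 - x + y + z + x * y + x * z - y * z + x * y * z) * (6 * e * c * c1 * c2)
      + (1 - x + 2 * y + 2 * z + x * y + x * z + y * z - x * y * z) * (8 * e * d * d1 * d2))
    = y * z * (a2 * a1) * (ppNum x y z * ((a*b^2*c*d) * (a1*b1^2*c1*d1) * (a2*b2^2*c2*d2))) := by
  obtain ⟨qa, qb, qc, qd, qe⟩ := one_var x a b c d ha hb hc hd
  obtain ⟨qa1, qb1, qc1, qd1, qe1⟩ := one_var y a1 b1 c1 d1 ha1 hb1 hc1 hd1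
  obtain ⟨qa2, qb2, qc2, qd2, qe2⟩ := one_var z a2 b2 c2 d2 ha2 hb2 hc2 hd2
  congr 1
  generalize a*b^2*c*d = I at *
  generalize a1*b1^2*c1*d1 = I1 at *
  generalize a2*b2^2*c2*d2 = I2 at *
  have hB : b * b1 * b2 * (9 * e + 6 * e * (x * b - y * b1 - z * b2)) =
      e * (9*(1+x)*(1+y)*(1+z)+6*(x*(1+y)*(1+z)-y*(1+x)*(1+z)-z*(1+x)*(1+y)))
        * b^2 * b1^2 * b2^2 := by
    calc _ = e * (9 * b * b1 * b2 + 6 * (x * b^2 * b1 * b2 - y * b1^2 * b * b2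
              - z * b2^2 * b * b1)) := by ring
      _ = e * (9 * ((1+x)*b^2) * ((1+y)*b1^2) * ((1+z)*b2^2)
            + 6 * (x * b^2 * ((1+y)*b1^2) * ((1+z)*b2^2) - y * b1^2 * ((1+x)*b^2) * ((1+z)*b2^2)
              - z * b2^2 * ((1+x)*b^2) * ((1+y)*b1^2))) := by rw [← qe, ← qe1, ← qe2]
      _ = _ := by ring
  rw [hB, qb, qb1, qb2, qa, qa1, qa2, qc, qc1, qc2, qd, qd1, qd2]
  have h1 : ppNum x y z = e * (24 * ppNum x y z) := by
    linear_combination (-(ppNum x y z)) * he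
  rw [h1, ← ppNum_eq]
  generalize (1+x)^2 = X1
  generalize (1+y)^2 = Y1
  generalize (1+z)^2 = Z1
  generalize (1+x+x^2) = X2
  generalize (1+y+y^2) = Y2
  generalize (1+z+z^2) = Z2
  generalize (1+x^2) = X3
  generalize (1+y^2) = Y3
  generalize (1+z^2) = Z3
  ring

theorem inv_int (P : MvPowerSeries (Fin 3) ℤ) (h : constantCoeff P = 1) :
    (MvPowerSeries.map (Int.castRingHom ℚ) P) * (MvPowerSeries.map (Int.castRingHom ℚ) P)⁻¹ = 1 ∧
    ∃ Q, (MvPowerSeries.map (Int.castRingHom ℚ) P)⁻¹ = MvPowerSeries.map (Int.castRingHom ℚ) Q := by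
  have h0 : (MvPowerSeries.map (Int.castRingHom ℚ) P)
      * (MvPowerSeries.map (Int.castRingHom ℚ) P)⁻¹ = 1 := by
    apply MvPowerSeries.mul_inv_cancel
    rw [MvPowerSeries.constantCoeff_map, h]; simp
  refine ⟨h0, MvPowerSeries.invOfUnit P 1, ?_⟩
  have h1 := congrArg (MvPowerSeries.map (Int.castRingHom ℚ))
    (MvPowerSeries.mul_invOfUnit P 1 (by simpa using h))
  rw [map_mul, map_one] at h1
  linear_combination (-(MvPowerSeries.map (Int.castRingHom ℚ) P)⁻¹) * h1
    + (MvPowerSeries.map (Int.castRingHom ℚ) (MvPowerSeries.invOfUnit P 1)) * h0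

theorem four_inv (i : Fin 3) :
    ((1 - X i : MvPowerSeries (Fin 3) ℚ) * (1 - X i)⁻¹ = 1 ∧
      ∃ Q, (1 - X i)⁻¹ = MvPowerSeries.map (Int.castRingHom ℚ) Q) ∧
    ((1 + X i : MvPowerSeries (Fin 3) ℚ) * (1 + X i)⁻¹ = 1 ∧
      ∃ Q, (1 + X i)⁻¹ = MvPowerSeries.map (Int.castRingHom ℚ) Q) ∧
    ((1 + X i ^ 2 : MvPowerSeries (Fin 3) ℚ) * (1 + X i ^ 2)⁻¹ = 1 ∧
      ∃ Q, (1 + X i ^ 2)⁻¹ = MvPowerSeries.map (Int.castRingHom ℚ) Q) ∧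
    ((1 + X i + X i ^ 2 : MvPowerSeries (Fin 3) ℚ) * (1 + X i + X i ^ 2)⁻¹ = 1 ∧
      ∃ Q, (1 + X i + X i ^ 2)⁻¹ = MvPowerSeries.map (Int.castRingHom ℚ) Q) := by
  have h1 := inv_int (1 - X i) (by simp)
  have h2 := inv_int (1 + X i) (by simp)
  have h3 := inv_int (1 + X i ^ 2) (by simp)
  have h4 := inv_int (1 + X i + X i ^ 2) (by simp)
  simp only [map_add, map_sub, map_one, map_pow, MvPowerSeries.map_X] at h1 h2 h3 h4
  exact ⟨h1, h2, h3, h4⟩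

theorem num_inv (n : ℕ) (k : ℚ) (hk : (n : ℚ) * (k * (1/24)) = 1) :
    ((n : MvPowerSeries (Fin 3) ℚ))⁻¹ = C k * C (1/24) := by
  have h : (n : MvPowerSeries (Fin 3) ℚ) = C (n : ℚ) := by simp
  have h2 : (n : MvPowerSeries (Fin 3) ℚ) * (C k * C (1/24)) = 1 := by
    rw [h, ← map_mul, ← map_mul, hk, map_one]
  have hn : (n : ℚ) ≠ 0 := by rintro h; simp [h] at hk
  have h3 : (n : MvPowerSeries (Fin 3) ℚ) * (n : MvPowerSeries (Fin 3) ℚ)⁻¹ = 1 := by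
    apply MvPowerSeries.mul_inv_cancel
    simpa using hn
  linear_combination (-(n : MvPowerSeries (Fin 3) ℚ)⁻¹) * h2 + (C k * C (1/24)) * h3

/-- **Integrality of the genus-one 2-point generating function** (Proposition 3, `n = 2`):
in `ℚ⟦q, q₁, q₂⟧` (with `q = X 0`, `q₁ = X 1`, `q₂ = X 2`), all coefficients of
`Φ₂ := (q₁q₂/((1−q₁)(1−q₂))) · [ 1/(24(1−q)(1−q₁)(1−q₂))
  + (1/((1+q)(1+q₁)(1+q₂)))(3/8 + (1/4)(q/(1+q) − q₁/(1+q₁) − q₂/(1+q₂)))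
  + (1−q+q₁+q₂+qq₁+qq₂−q₁q₂+qq₁q₂)/(4(1+q²)(1+q₁²)(1+q₂²))
  + (1−q+2q₁+2q₂+qq₁+qq₂+q₁q₂−qq₁q₂)/(3(1+q+q²)(1+q₁+q₁²)(1+q₂+q₂²)) ]`
are integers. -/
theorem integrality_two_points :
    ∀ e : Fin 3 →₀ ℕ, ∃ n : ℤ,
      MvPowerSeries.coeff (R := ℚ) e
        ((X 1 * X 2 * ((1 - X 1) * (1 - X 2))⁻¹) *
          ((24 * ((1 - X 0) * ((1 - X 1) * (1 - X 2))))⁻¹ +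
            ((1 + X 0) * ((1 + X 1) * (1 + X 2)))⁻¹ *
              (C (σ := Fin 3) (R := ℚ) (3/8) + C (σ := Fin 3) (R := ℚ) (1/4) *
                (X 0 * (1 + X 0)⁻¹ - X 1 * (1 + X 1)⁻¹ - X 2 * (1 + X 2)⁻¹)) +
            (1 - X 0 + X 1 + X 2 + X 0 * X 1 + X 0 * X 2 - X 1 * X 2 + X 0 * X 1 * X 2) *
              (4 * ((1 + X 0 ^ 2) * ((1 + X 1 ^ 2) * (1 + X 2 ^ 2))))⁻¹ +
            (1 - X 0 + 2 * X 1 + 2 * X 2 + X 0 * X 1 + X 0 * X 2 + X 1 * X 2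
                - X 0 * X 1 * X 2) *
              (3 * ((1 + X 0 + X 0 ^ 2) * ((1 + X 1 + X 1 ^ 2) *
                (1 + X 2 + X 2 ^ 2))))⁻¹)) = (n : ℚ) := by
  intro e
  obtain ⟨⟨ha, A, hA⟩, ⟨hb, B, hB⟩, ⟨hc, C0, hC⟩, ⟨hd, D, hD⟩⟩ := four_inv 0
  obtain ⟨⟨ha1, A1, hA1⟩, ⟨hb1, B1, hB1⟩, ⟨hc1, C1, hC1⟩, ⟨hd1, D1, hD1⟩⟩ := four_inv 1
  obtain ⟨⟨ha2, A2, hA2⟩, ⟨hb2, B2, hB2⟩, ⟨hc2, C2, hC2⟩, ⟨hd2, D2, hD2⟩⟩ := four_inv 2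
  have e24 : (24 : MvPowerSeries (Fin 3) ℚ)⁻¹ = C (1/24) := by
    have := num_inv 24 1 (by norm_num)
    simpa using this
  have e4 : (4 : MvPowerSeries (Fin 3) ℚ)⁻¹ = 6 * C (1/24) := by
    have := num_inv 4 6 (by norm_num)
    simpa only [map_ofNat, Nat.cast_ofNat] using this
  have e3 : (3 : MvPowerSeries (Fin 3) ℚ)⁻¹ = 8 * C (1/24) := by
    have := num_inv 3 8 (by norm_num)
    simpa only [map_ofNat, Nat.cast_ofNat] using this
  have c1 : (C (3/8) : MvPowerSeries (Fin 3) ℚ) = 9 * C (1/24) := by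
    rw [← map_ofNat (C (σ := Fin 3) (R := ℚ)) 9, ← map_mul]; norm_num
  have c2 : (C (1/4) : MvPowerSeries (Fin 3) ℚ) = 6 * C (1/24) := by
    rw [← map_ofNat (C (σ := Fin 3) (R := ℚ)) 6, ← map_mul]; norm_num
  have he : (24 : MvPowerSeries (Fin 3) ℚ) * C (1/24) = 1 := by
    rw [← map_ofNat (C (σ := Fin 3) (R := ℚ)) 24, ← map_mul]; norm_num
  have key := key_id _ _ _ _ _ _ _ _ _ _ _ _ _ _ _ _ he ha hb hc hd ha1 hb1 hc1 hd1 ha2 hb2 hc2 hd2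
  simp only [MvPowerSeries.mul_inv_rev, e24, e4, e3, c1, c2]
  have hX : ∀ i : Fin 3, (X i : MvPowerSeries (Fin 3) ℚ)
      = MvPowerSeries.map (Int.castRingHom ℚ) (X i) := fun i => by simp
  have hint : ∃ Q : MvPowerSeries (Fin 3) ℤ,
      X 1 * X 2 * ((1 - X 2)⁻¹ * (1 - X 1)⁻¹) * (ppNum (X 0) (X 1) (X 2) *
      (((1 - X 0)⁻¹*((1 + X 0)⁻¹)^2*(1 + X 0 ^ 2)⁻¹*(1 + X 0 + X 0 ^ 2)⁻¹)
      * ((1 - X 1)⁻¹*((1 + X 1)⁻¹)^2*(1 + X 1 ^ 2)⁻¹*(1 + X 1 + X 1 ^ 2)⁻¹)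
      * ((1 - X 2)⁻¹*((1 + X 2)⁻¹)^2*(1 + X 2 ^ 2)⁻¹*(1 + X 2 + X 2 ^ 2)⁻¹)))
      = MvPowerSeries.map (Int.castRingHom ℚ) Q := by
    rw [hA, hB, hC, hD, hA1, hB1, hC1, hD1, hA2, hB2, hC2, hD2, hX 0, hX 1, hX 2, ← ppNum_map]
    simp only [← map_mul, ← map_pow]
    exact ⟨_, rfl⟩
  obtain ⟨Q, hQ⟩ := hint
  refine ⟨coeff e Q, ?_⟩
  have fin := congrArg (coeff (R := ℚ) e) (key.trans hQ)
  rw [MvPowerSeries.coeff_map] at fin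
  refine Eq.trans (congrArg (coeff (R := ℚ) e) ?_) fin
  clear fin hQ key hX hA hB hC hD hA1 hB1 hC1 hD1 hA2 hB2 hC2 hD2
  clear ha hb hc hd ha1 hb1 hc1 hd1 ha2 hb2 hc2 hd2 he c1 c2 e3 e4 e24
  refine congrArg _ ?_
  refine congrArg₂ _ (congrArg₂ _ (congrArg₂ _ ?_ ?_) (congrArg _ ?_)) (congrArg _ ?_)
  · ring
  · ring
  · ring
  · ring
end

section
/- In the ring of formal power series over ℚ in the variables q, q₁, q₂, q₃, the series Φ₃ := (∏_{i=1}^{3} q_i/(1−q_i)) · [ 2/(24(1−q)∏_{i=1}^{3}(1−q_i)) + (1/((1+q)∏_{i=1}^{3}(1+q_i))) · ( −3/4 + (1/2)( q/(1+q) − ∑_{i=1}^{3} q_i/(1+q_i) ) ) + (1/(3(1+q+q²)∏_{i=1}^{3}(1+q_i+q_i²))) · ( −1 + q − (2+q)(q₁+q₂+q₃) − (1+2q)(q₁q₂+q₂q₃+q₃q₁) + (1−q) q₁q₂q₃ ) ] has all of its coefficients in ℤ. (This is the integrality, asserted in the paper, of the generating function of Proposition 3 for n = 3: the sum of the main contribution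 and the orbifold contribution Σ₃ computes integer Euler characteristics on M̄_{1,3}.) -/
open MvPowerSeries

theorem aux_two {R : Type*} [CommRing R] (a0 a1 a2 a3 b0 b1 b2 b3 x0 x1 x2 x3 : R)
    (ha0 : (1 - x0) * a0 = 1) (ha1 : (1 - x1) * a1 = 1)
    (ha2 : (1 - x2) * a2 = 1) (ha3 : (1 - x3) * a3 = 1)
    (hb0 : (1 + x0) * b0 = 1) (hb1 : (1 + x1) * b1 = 1)
    (hb2 : (1 + x2) * b2 = 1) (hb3 : (1 + x3) * b3 = 1)
    (S : Subring R) (ma0 : a0 ∈ S) (ma1 : a1 ∈ S) (ma2 : a2 ∈ S) (ma3 : a3 ∈ S)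
    (mb0 : b0 ∈ S) (mb1 : b1 ∈ S) (mb2 : b2 ∈ S) (mb3 : b3 ∈ S)
    (mx0 : x0 ∈ S) (mx1 : x1 ∈ S) (mx2 : x2 ∈ S) (mx3 : x3 ∈ S) :
    ∃ s ∈ S, -(a0 * a1 * a2 * a3) + b0 * b1 * b2 * b3 *
      (-3 + 2 * (x0 * b0 - (x1 * b1 + x2 * b2 + x3 * b3))) = 4 * s := by
  have key : ∀ a b x : R, (1 - x) * a = 1 → (1 + x) * b = 1 → a ∈ S → b ∈ S → x ∈ S →
      ∃ v ∈ S, ∃ z ∈ S, a = b * (1 + 2 * v) ∧ v = x * b + 2 * z := by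
    intro a b x ha hb ma mb mx
    have h1 : a = b * (1 + 2 * (x * a)) := by
      linear_combination (-a) * hb + b * ha
    refine ⟨x * a, S.mul_mem mx ma, x * x * a * b,
      S.mul_mem (S.mul_mem (S.mul_mem mx mx) ma) mb, h1, ?_⟩
    linear_combination x * h1
  obtain ⟨v0, mv0, z0, mz0, e0, f0⟩ := key a0 b0 x0 ha0 hb0 ma0 mb0 mx0
  obtain ⟨v1, mv1, z1, mz1, e1, f1⟩ := key a1 b1 x1 ha1 hb1 ma1 mb1 mx1
  obtain ⟨v2, mv2, z2, mz2, e2, f2⟩ := key a2 b2 x2 ha2 hb2 ma2 mb2 mx2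
  obtain ⟨v3, mv3, z3, mz3, e3, f3⟩ := key a3 b3 x3 ha3 hb3 ma3 mb3 mx3
  clear ha0 ha1 ha2 ha3 hb0 hb1 hb2 hb3 key
  have two : (2 : R) ∈ S := by exact_mod_cast natCast_mem S 2
  refine ⟨b0 * b1 * b2 * b3 * (-1 - (x1 * b1 + x2 * b2 + x3 * b3) - (z0 + z1 + z2 + z3) -
    (v0 * v1 + v0 * v2 + v0 * v3 + v1 * v2 + v1 * v3 + v2 * v3
      + 2 * (v0 * v1 * v2 + v0 * v1 * v3 + v0 * v2 * v3 + v1 * v2 * v3)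
      + 2 * 2 * (v0 * v1 * v2 * v3))), ?_, ?_⟩
  · repeat' first
      | assumption | exact S.one_mem | apply S.mul_mem | apply S.sub_mem | apply S.add_mem
      | apply S.neg_mem
  · rw [e0, e1, e2, e3]
    linear_combination (-2 * (b0 * b1 * b2 * b3)) * (f0 + f1 + f2 + f3)

theorem aux_three {R : Type*} [CommRing R] (a0 a1 a2 a3 c0 c1 c2 c3 x0 x1 x2 x3 : R)
    (ha0 : (1 - x0) * a0 = 1) (ha1 : (1 - x1) * a1 = 1)
    (ha2 : (1 - x2) * a2 = 1) (ha3 : (1 - x3) * a3 = 1)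
    (hc0 : (1 + x0 + x0 ^ 2) * c0 = 1) (hc1 : (1 + x1 + x1 ^ 2) * c1 = 1)
    (hc2 : (1 + x2 + x2 ^ 2) * c2 = 1) (hc3 : (1 + x3 + x3 ^ 2) * c3 = 1)
    (S : Subring R) (ma0 : a0 ∈ S) (ma1 : a1 ∈ S) (ma2 : a2 ∈ S) (ma3 : a3 ∈ S)
    (mc0 : c0 ∈ S) (mc1 : c1 ∈ S) (mc2 : c2 ∈ S) (mc3 : c3 ∈ S)
    (mx0 : x0 ∈ S) (mx1 : x1 ∈ S) (mx2 : x2 ∈ S) (mx3 : x3 ∈ S) :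
    ∃ s ∈ S, a0 * a1 * a2 * a3 + c0 * c1 * c2 * c3 *
      (-1 + x0 - (2 + x0) * (x1 + x2 + x3) - (1 + 2 * x0) * (x1 * x2 + x2 * x3 + x3 * x1)
        + (1 - x0) * (x1 * x2 * x3)) = 3 * s := by
  have key : ∀ a c x : R, (1 - x) * a = 1 → (1 + x + x ^ 2) * c = 1 → a ∈ S → x ∈ S →
      ∃ u ∈ S, a = (1 - x) * c * (1 + 3 * u) := by
    intro a c x ha hc ma mx
    refine ⟨x * a * a, S.mul_mem (S.mul_mem mx ma) ma, ?_⟩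
    have h1 : a * a = c * (1 + 3 * (x * a * a)) := by
      linear_combination (-(a * a)) * hc + c * ((1 - x) * a + 1) * ha
    linear_combination (1 - x) * h1 - a * ha
  obtain ⟨u0, mu0, e0⟩ := key a0 c0 x0 ha0 hc0 ma0 mx0
  obtain ⟨u1, mu1, e1⟩ := key a1 c1 x1 ha1 hc1 ma1 mx1
  obtain ⟨u2, mu2, e2⟩ := key a2 c2 x2 ha2 hc2 ma2 mx2
  obtain ⟨u3, mu3, e3⟩ := key a3 c3 x3 ha3 hc3 ma3 mx3
  clear ha0 ha1 ha2 ha3 hc0 hc1 hc2 hc3 key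
  have three : (3 : R) ∈ S := by exact_mod_cast natCast_mem S 3
  obtain ⟨W, mW, hW⟩ : ∃ W ∈ S, (1 + 3 * u0) * (1 + 3 * u1) * (1 + 3 * u2) * (1 + 3 * u3)
      = 1 + 3 * W := by
    have step : ∀ p q : R, p ∈ S → q ∈ S → ∃ r ∈ S, (1 + 3 * p) * (1 + 3 * q) = 1 + 3 * r := by
      intro p q mp mq
      refine ⟨p + q + 3 * p * q, S.add_mem (S.add_mem mp mq)
        (S.mul_mem (S.mul_mem three mp) mq), by ring⟩
    obtain ⟨r, mr, hr⟩ := step u0 u1 mu0 mu1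
    obtain ⟨r', mr', hr'⟩ := step r u2 mr mu2
    obtain ⟨w, mw, hw⟩ := step r' u3 mr' mu3
    exact ⟨w, mw, by rw [hr, hr', hw]⟩
  refine ⟨c0 * c1 * c2 * c3 * ((1 - x0) * (1 - x1) * (1 - x2) * (1 - x3) * W
    - (x1 + x2 + x3) - x0 * (x1 * x2 + x2 * x3 + x3 * x1)), ?_, ?_⟩
  · repeat' first
      | assumption | exact S.one_mem | apply S.mul_mem | apply S.sub_mem | apply S.add_mem
      | apply S.neg_mem
  · have hA : a0 * a1 * a2 * a3 = c0 * c1 * c2 * c3 *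
        ((1 - x0) * (1 - x1) * (1 - x2) * (1 - x3)) * (1 + 3 * W) := by
      rw [← hW, e0, e1, e2, e3]; ring
    rw [hA]; ring

theorem inv_mem_int (f : MvPowerSeries (Fin 4) ℤ) (hf : constantCoeff f = 1) :
    (map (Int.castRingHom ℚ) f)⁻¹ ∈ (map (σ := Fin 4) (Int.castRingHom ℚ)).range := by
  refine ⟨invOfUnit f 1, ?_⟩
  have h := mul_invOfUnit f 1 (by simpa using hf)
  have h0 : constantCoeff (map (Int.castRingHom ℚ) f) ≠ 0 := by
    rw [constantCoeff_map, hf]; simp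
  rw [MvPowerSeries.eq_inv_iff_mul_eq_one h0, mul_comm, ← map_mul, h, map_one]

/-- **Integrality of the genus-one 3-point generating function** (Proposition 3, `n = 3`):
in `ℚ⟦q, q₁, q₂, q₃⟧` (with `q = X 0`, `qᵢ = X i`), all coefficients of
`Φ₃ := (∏ᵢ qᵢ/(1−qᵢ)) · [ 2/(24(1−q)∏ᵢ(1−qᵢ))
  + (1/((1+q)∏ᵢ(1+qᵢ)))(−3/4 + (1/2)(q/(1+q) − ∑ᵢ qᵢ/(1+qᵢ)))
  + (1/(3(1+q+q²)∏ᵢ(1+qᵢ+qᵢ²)))(−1 + q − (2+q)(q₁+q₂+q₃)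
      − (1+2q)(q₁q₂+q₂q₃+q₃q₁) + (1−q)q₁q₂q₃) ]`
are integers. -/
theorem integrality_three_points :
    ∀ e : Fin 4 →₀ ℕ, ∃ n : ℤ,
      MvPowerSeries.coeff (R := ℚ) e
        ((X 1 * (1 - X 1)⁻¹ * (X 2 * (1 - X 2)⁻¹) * (X 3 * (1 - X 3)⁻¹)) *
          (2 * (24 * ((1 - X 0) * ((1 - X 1) * ((1 - X 2) * (1 - X 3)))))⁻¹ +
            ((1 + X 0) * ((1 + X 1) * ((1 + X 2) * (1 + X 3))))⁻¹ *
              (C (σ := Fin 4) (R := ℚ) (-3/4) + C (σ := Fin 4) (R := ℚ) (1/2) *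
                (X 0 * (1 + X 0)⁻¹ -
                  (X 1 * (1 + X 1)⁻¹ + X 2 * (1 + X 2)⁻¹ + X 3 * (1 + X 3)⁻¹))) +
            (3 * ((1 + X 0 + X 0 ^ 2) * ((1 + X 1 + X 1 ^ 2) *
                ((1 + X 2 + X 2 ^ 2) * (1 + X 3 + X 3 ^ 2)))))⁻¹ *
              (-1 + X 0 - (2 + X 0) * (X 1 + X 2 + X 3)
                - (1 + 2 * X 0) * (X 1 * X 2 + X 2 * X 3 + X 3 * X 1)
                + (1 - X 0) * (X 1 * X 2 * X 3)))) = (n : ℚ) := by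
  set S := (map (σ := Fin 4) (Int.castRingHom ℚ)).range with hS
  have mX : ∀ i, (X i : MvPowerSeries (Fin 4) ℚ) ∈ S := fun i => ⟨X i, by simp⟩
  have na : ∀ i, constantCoeff (1 - X i : MvPowerSeries (Fin 4) ℚ) ≠ 0 := fun i => by simp
  have nb : ∀ i, constantCoeff (1 + X i : MvPowerSeries (Fin 4) ℚ) ≠ 0 := fun i => by simp
  have nc : ∀ i, constantCoeff (1 + X i + X i ^ 2 : MvPowerSeries (Fin 4) ℚ) ≠ 0 :=
    fun i => by simp
  have ha := fun i => MvPowerSeries.mul_inv_cancel _ (na i)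
  have hb := fun i => MvPowerSeries.mul_inv_cancel _ (nb i)
  have hc := fun i => MvPowerSeries.mul_inv_cancel _ (nc i)
  have ma : ∀ i, (1 - X i : MvPowerSeries (Fin 4) ℚ)⁻¹ ∈ S := fun i => by
    have h := inv_mem_int (1 - X i) (by simp)
    rw [map_sub, map_one, map_X] at h
    exact h
  have mb : ∀ i, (1 + X i : MvPowerSeries (Fin 4) ℚ)⁻¹ ∈ S := fun i => by
    have h := inv_mem_int (1 + X i) (by simp)
    rw [map_add, map_one, map_X] at h
    exact h
  have mc : ∀ i, (1 + X i + X i ^ 2 : MvPowerSeries (Fin 4) ℚ)⁻¹ ∈ S := fun i => by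
    have h := inv_mem_int (1 + X i + X i ^ 2) (by simp)
    rw [map_add, map_add, map_pow, map_one, map_X] at h
    exact h
  have h24 : (24 : MvPowerSeries (Fin 4) ℚ)⁻¹ = C (1 / 24) := by
    have : (24 : MvPowerSeries (Fin 4) ℚ) = C 24 := (map_ofNat C 24).symm
    rw [this]
    symm
    rw [MvPowerSeries.eq_inv_iff_mul_eq_one (by simp), ← map_mul]; norm_num
  have h3 : (3 : MvPowerSeries (Fin 4) ℚ)⁻¹ = C (1 / 3) := by
    have : (3 : MvPowerSeries (Fin 4) ℚ) = C 3 := (map_ofNat C 3).symm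
    rw [this]
    symm
    rw [MvPowerSeries.eq_inv_iff_mul_eq_one (by simp), ← map_mul]; norm_num
  have k : ∀ (r : ℚ) (n : ℤ), r = n * (1 / 24) →
      (C r : MvPowerSeries (Fin 4) ℚ) = (n : MvPowerSeries (Fin 4) ℚ) * C (1 / 24) := by
    intro r n h
    rw [h, map_mul, map_intCast]
  have k1 := k (1 / 3) 8 (by norm_num)
  have k2 := k (-3 / 4) (-18) (by norm_num)
  have k3 := k (1 / 2) 12 (by norm_num)
  have k4 := k 1 24 (by norm_num)
  rw [map_one] at k4
  push_cast at k1 k2 k3 k4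
  simp only [MvPowerSeries.mul_inv_rev, h24, h3, k1, k2, k3]
  obtain ⟨s, ms, hs⟩ := aux_two _ _ _ _ _ _ _ _ _ _ _ _ (ha 0) (ha 1) (ha 2) (ha 3)
    (hb 0) (hb 1) (hb 2) (hb 3) S (ma 0) (ma 1) (ma 2) (ma 3) (mb 0) (mb 1) (mb 2) (mb 3)
    (mX 0) (mX 1) (mX 2) (mX 3)
  obtain ⟨t, mt, ht⟩ := aux_three _ _ _ _ _ _ _ _ _ _ _ _ (ha 0) (ha 1) (ha 2) (ha 3)
    (hc 0) (hc 1) (hc 2) (hc 3) S (ma 0) (ma 1) (ma 2) (ma 3) (mc 0) (mc 1) (mc 2) (mc 3)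
    (mX 0) (mX 1) (mX 2) (mX 3)
  have pm : (X 1 * (1 - X 1)⁻¹ * (X 2 * (1 - X 2)⁻¹) * (X 3 * (1 - X 3)⁻¹) :
      MvPowerSeries (Fin 4) ℚ) * (s + t) ∈ S :=
    S.mul_mem (S.mul_mem (S.mul_mem (S.mul_mem (mX 1) (ma 1)) (S.mul_mem (mX 2) (ma 2)))
      (S.mul_mem (mX 3) (ma 3))) (S.add_mem ms mt)
  obtain ⟨f, hf⟩ := pm
  intro e
  refine ⟨coeff e f, ?_⟩
  rw [← eq_intCast (Int.castRingHom ℚ), ← coeff_map, hf]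
  congr 2
  generalize (C (1 / 24) : MvPowerSeries (Fin 4) ℚ) = h at *
  linear_combination (6 * h) * hs + (8 * h) * ht - (s + t) * k4
end

section
/- In the ring of formal power series over ℚ in the variables q, q₁, q₂, q₃, q₄, the series Φ₄ := (∏_{i=1}^{4} q_i/(1−q_i)) · [ 6/(24(1−q)∏_{i=1}^{4}(1−q_i)) + (1/((1+q)∏_{i=1}^{4}(1+q_i))) · ( 3/4 + (1/2)( q/(1+q) − ∑_{i=1}^{4} q_i/(1+q_i) ) ) ] has all of its coefficients in ℤ. (This is the integrality, asserted in the paper, of the generating function of Proposition 3 for n = 4: the sum of the main contribution and the orbifold contribution Σ₄ computes integer Euler characteristics on M̄_{1,4}.) -/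
open MvPowerSeries

namespace FourPt

noncomputable abbrev S : Subring (MvPowerSeries (Fin 5) ℚ) :=
  (MvPowerSeries.map (σ := Fin 5) (Int.castRingHom ℚ)).range

lemma X_mem (i : Fin 5) : (X i : MvPowerSeries (Fin 5) ℚ) ∈ S :=
  ⟨X i, by simp⟩

lemma inv_mem (f : MvPowerSeries (Fin 5) ℤ) (hf : constantCoeff f = 1) :
    (MvPowerSeries.map (Int.castRingHom ℚ) f)⁻¹ ∈ S := by
  refine ⟨invOfUnit f 1, ?_⟩
  have h := mul_invOfUnit f 1 (by simpa using hf)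
  have h2 := congrArg (MvPowerSeries.map (Int.castRingHom ℚ)) h
  rw [map_mul, map_one] at h2
  symm
  rw [MvPowerSeries.inv_eq_iff_mul_eq_one]
  · rw [mul_comm]; exact h2
  · rw [constantCoeff_map, hf]; simp

lemma u_mem (i : Fin 5) : (1 - X i : MvPowerSeries (Fin 5) ℚ)⁻¹ ∈ S := by
  have h := inv_mem (1 - X i) (by simp)
  rwa [map_sub, map_one, map_X] at h

lemma v_mem (i : Fin 5) : (1 + X i : MvPowerSeries (Fin 5) ℚ)⁻¹ ∈ S := by
  have h := inv_mem (1 + X i) (by simp)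
  rwa [map_add, map_one, map_X] at h

lemma u_mul (i : Fin 5) : (1 - X i : MvPowerSeries (Fin 5) ℚ) * (1 - X i)⁻¹ = 1 :=
  MvPowerSeries.mul_inv_cancel _ (by simp)

lemma v_mul (i : Fin 5) : (1 + X i : MvPowerSeries (Fin 5) ℚ) * (1 + X i)⁻¹ = 1 :=
  MvPowerSeries.mul_inv_cancel _ (by simp)

lemma uv {R : Type*} [CommRing R] {x u v : R} (hu : (1 - x) * u = 1) (hv : (1 + x) * v = 1) :
    u = v * (1 + 2 * (x * u)) := by
  linear_combination v * hu - u * hv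

lemma key {R : Type*} [CommRing R] (T : Subring R) (c : R) (hc : 4 * c = 1)
    (x u v : Fin 5 → R) (hx : ∀ i, x i ∈ T) (hu : ∀ i, u i ∈ T) (hv : ∀ i, v i ∈ T)
    (h : ∀ i, u i = v i * (1 + 2 * (x i * u i))) :
    c * (u 0 * (u 1 * (u 2 * (u 3 * u 4)))) + v 0 * (v 1 * (v 2 * (v 3 * v 4))) *
      (3 * c + 2 * c * (x 0 * v 0 - (x 1 * v 1 + x 2 * v 2 + x 3 * v 3 + x 4 * v 4))) ∈ T := by
  have hA : ∃ e ∈ T, u 0 * (u 1 * (u 2 * (u 3 * u 4))) = v 0 * (v 1 * (v 2 * (v 3 * v 4))) *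
      (1 + 2 * (x 0 * u 0 + (x 1 * u 1 + (x 2 * u 2 + (x 3 * u 3 + x 4 * u 4)))) + 4 * e) := by
    have step : ∀ i, ∀ A B s : R, s ∈ T → (∃ e ∈ T, A = B * (1 + 2 * s + 4 * e)) →
        ∃ e ∈ T, u i * A = v i * B * (1 + 2 * (x i * u i + s) + 4 * e) := by
      rintro i A B s hs ⟨e, he, rfl⟩
      have hy := T.mul_mem (hx i) (hu i)
      refine ⟨x i * u i * s + e + (x i * u i * e + x i * u i * e),
        T.add_mem (T.add_mem (T.mul_mem hy hs) he)
          (T.add_mem (T.mul_mem hy he) (T.mul_mem hy he)), ?_⟩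
      linear_combination (B * (1 + 2 * s + 4 * e)) * h i
    have hy : ∀ i, x i * u i ∈ T := fun i => T.mul_mem (hx i) (hu i)
    refine step 0 _ _ _ ?_ (step 1 _ _ _ ?_ (step 2 _ _ _ ?_ (step 3 _ _ _ ?_
      ⟨0, T.zero_mem, ?_⟩)))
    · exact T.add_mem (hy _) (T.add_mem (hy _) (T.add_mem (hy _) (hy _)))
    · exact T.add_mem (hy _) (T.add_mem (hy _) (hy _))
    · exact T.add_mem (hy _) (hy _)
    · exact hy _
    · linear_combination h 4
  obtain ⟨e, he, hA⟩ := hA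
  have hw : ∀ i, x i * (x i * u i * v i) ∈ T := fun i =>
    T.mul_mem (hx i) (T.mul_mem (T.mul_mem (hx i) (hu i)) (hv i))
  have hB : v 0 * (v 1 * (v 2 * (v 3 * v 4))) ∈ T :=
    T.mul_mem (hv _) (T.mul_mem (hv _) (T.mul_mem (hv _) (T.mul_mem (hv _) (hv _))))
  have hz : v 0 * (v 1 * (v 2 * (v 3 * v 4))) *
      (1 + e + (x 0 * v 0 + x 0 * (x 0 * u 0 * v 0)) + x 1 * (x 1 * u 1 * v 1)
        + x 2 * (x 2 * u 2 * v 2) + x 3 * (x 3 * u 3 * v 3) + x 4 * (x 4 * u 4 * v 4)) ∈ T :=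
    T.mul_mem hB (T.add_mem (T.add_mem (T.add_mem (T.add_mem (T.add_mem
      (T.add_mem T.one_mem he) (T.add_mem (T.mul_mem (hx _) (hv _)) (hw _))) (hw _)) (hw _))
      (hw _)) (hw _))
  rw [hA]
  convert hz using 1
  generalize v 0 * (v 1 * (v 2 * (v 3 * v 4))) = B
  linear_combination (B * (1 + e + (x 0 * v 0 + x 0 * (x 0 * u 0 * v 0)) + x 1 * (x 1 * u 1 * v 1)
        + x 2 * (x 2 * u 2 * v 2) + x 3 * (x 3 * u 3 * v 3) + x 4 * (x 4 * u 4 * v 4))) * hc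
    + 2 * c * B * (x 0 * h 0 + x 1 * h 1 + x 2 * h 2 + x 3 * h 3 + x 4 * h 4)

end FourPt

/-- **Integrality of the genus-one 4-point generating function** (Proposition 3, `n = 4`):
in `ℚ⟦q, q₁, q₂, q₃, q₄⟧` (with `q = X 0`, `qᵢ = X i`), all coefficients of
`Φ₄ := (∏ᵢ qᵢ/(1−qᵢ)) · [ 6/(24(1−q)∏ᵢ(1−qᵢ))
  + (1/((1+q)∏ᵢ(1+qᵢ)))(3/4 + (1/2)(q/(1+q) − ∑ᵢ qᵢ/(1+qᵢ))) ]`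
are integers. -/
theorem integrality_four_points :
    ∀ e : Fin 5 →₀ ℕ, ∃ n : ℤ,
      MvPowerSeries.coeff (R := ℚ) e
        ((X 1 * (1 - X 1)⁻¹ * (X 2 * (1 - X 2)⁻¹) * (X 3 * (1 - X 3)⁻¹) *
            (X 4 * (1 - X 4)⁻¹)) *
          (6 * (24 * ((1 - X 0) * ((1 - X 1) * ((1 - X 2) * ((1 - X 3) * (1 - X 4))))))⁻¹ +
            ((1 + X 0) * ((1 + X 1) * ((1 + X 2) * ((1 + X 3) * (1 + X 4)))))⁻¹ *
              (C (σ := Fin 5) (R := ℚ) (3/4) + C (σ := Fin 5) (R := ℚ) (1/2) *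
                (X 0 * (1 + X 0)⁻¹ -
                  (X 1 * (1 + X 1)⁻¹ + X 2 * (1 + X 2)⁻¹ + X 3 * (1 + X 3)⁻¹ +
                    X 4 * (1 + X 4)⁻¹))))) = (n : ℚ) := by
  intro e
  have hk := FourPt.key FourPt.S (C (σ := Fin 5) (R := ℚ) (1/4))
    (by
      have : (4 : MvPowerSeries (Fin 5) ℚ) = C (σ := Fin 5) (R := ℚ) 4 := (map_ofNat _ _).symm
      rw [this, ← map_mul]; norm_num)
    (fun i => X i) (fun i => (1 - X i)⁻¹) (fun i => (1 + X i)⁻¹)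
    FourPt.X_mem FourPt.u_mem FourPt.v_mem
    (fun i => FourPt.uv (FourPt.u_mul i) (FourPt.v_mul i))
  have hp : ∀ i : Fin 5, (X i * (1 - X i)⁻¹ : MvPowerSeries (Fin 5) ℚ) ∈ FourPt.S :=
    fun i => FourPt.S.mul_mem (FourPt.X_mem i) (FourPt.u_mem i)
  have h := FourPt.S.mul_mem (FourPt.S.mul_mem (FourPt.S.mul_mem (FourPt.S.mul_mem
    (hp 1) (hp 2)) (hp 3)) (hp 4)) hk
  obtain ⟨g, hg⟩ := h
  refine ⟨coeff e g, ?_⟩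
  have h24 : (6 : MvPowerSeries (Fin 5) ℚ) * 24⁻¹ = C (σ := Fin 5) (R := ℚ) (1/4) := by
    have h1 : (24 : MvPowerSeries (Fin 5) ℚ) = C (σ := Fin 5) (R := ℚ) 24 := (map_ofNat _ _).symm
    have h2 : (6 : MvPowerSeries (Fin 5) ℚ) = C (σ := Fin 5) (R := ℚ) 6 := (map_ofNat _ _).symm
    rw [h1, h2, MvPowerSeries.C_inv, ← map_mul]; norm_num
  have h34 : C (σ := Fin 5) (R := ℚ) (3/4) = 3 * C (σ := Fin 5) (R := ℚ) (1/4) := by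
    have h2 : (3 : MvPowerSeries (Fin 5) ℚ) = C (σ := Fin 5) (R := ℚ) 3 := (map_ofNat _ _).symm
    rw [h2, ← map_mul]; norm_num
  have h12 : C (σ := Fin 5) (R := ℚ) (1/2) = 2 * C (σ := Fin 5) (R := ℚ) (1/4) := by
    have h2 : (2 : MvPowerSeries (Fin 5) ℚ) = C (σ := Fin 5) (R := ℚ) 2 := (map_ofNat _ _).symm
    rw [h2, ← map_mul]; norm_num
  have hgc : coeff e (MvPowerSeries.map (Int.castRingHom ℚ) g) = ((coeff e g : ℤ) : ℚ) := by
    simp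
  rw [← hgc, hg, h34, h12]
  congr 2
  simp only [MvPowerSeries.mul_inv_rev]
  rw [← h24]
  ring
end
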